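/- arXiv:1506.08927 — 4 statements merged into one kernel-verified Lean document; each statement's English description precedes it below -/
import Mathlib

section
/- Assume 0 ≤ i < k < j < ℓ ≤ n. Then Hom(X_{i,j}, X_{k,ℓ}) ≠ 0 if and only if ε_k = − and ε_j = −; and Hom(X_{k,ℓ}, X_{i,j}) ≠ 0 if and only if ε_k = + and ε_j = +. -/
namespace ESPaper

/-- Source of arrow `a m` (between vertices `m` and `m+1`): `m` if `ε m = +` (true). -/
def asrc (ε : ℕ → Bool) (m : ℕ) : ℕ := if ε m then m else m + 1

/-- Target of arrow `a m`. -/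
def atgt (ε : ℕ → Bool) (m : ℕ) : ℕ := if ε m then m + 1 else m

/-- A representation of the type `A_n` quiver `Q_ε`: finite dimensional vector spaces at the
vertices `1, …, n` (the spaces at the remaining indices are required to be trivial, so that
the maps attached to indices outside `1, …, n-1` carry no information) together with a
linear map along each arrow `a m : asrc ε m → atgt ε m`, `1 ≤ m ≤ n-1`. -/
structure Rep (K : Type) [Field K] (n : ℕ) (ε : ℕ → Bool) : Type 1 where
  V : ℕ → Type
  [instAdd : ∀ m, AddCommGroup (V m)]
  [instMod : ∀ m, Module K (V m)]
  [instFin : ∀ m, FiniteDimensional K (V m)]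
  triv : ∀ m, m = 0 ∨ n < m → Subsingleton (V m)
  φ : ∀ m, V (asrc ε m) →ₗ[K] V (atgt ε m)

attribute [instance] Rep.instAdd Rep.instMod Rep.instFin

/-- A morphism of representations of `Q_ε`. -/
structure RepHom {K : Type} [Field K] {n : ℕ} {ε : ℕ → Bool} (A B : Rep K n ε) where
  app : ∀ m, A.V m →ₗ[K] B.V m
  comm : ∀ m, (app (atgt ε m)).comp (A.φ m) = (B.φ m).comp (app (asrc ε m))

/-- Vertex space of the indecomposable `X_{i,j}` (for `0 ≤ i < j ≤ n`): `K` at the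
vertices `i+1, …, j` and `0` elsewhere. -/
def XV (K : Type) [Field K] (n i j m : ℕ) : Submodule K K :=
  if i + 1 ≤ m ∧ m ≤ j ∧ m ≤ n then ⊤ else ⊥

/-- Arrow map of the indecomposable `X_{i,j}`: the identity whenever both endpoints of the
arrow lie in the support, and zero otherwise. -/
def Xφ (K : Type) [Field K] (n : ℕ) (ε : ℕ → Bool) (i j m : ℕ) :
    XV K n i j (asrc ε m) →ₗ[K] XV K n i j (atgt ε m) :=
  if h : i + 1 ≤ atgt ε m ∧ atgt ε m ≤ j ∧ atgt ε m ≤ n then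
    LinearMap.codRestrict _ (XV K n i j (asrc ε m)).subtype
      (fun x => by simp [XV, h.1, h.2.1, h.2.2])
  else 0

/-- The indecomposable representation `X_{i,j}` of `Q_ε`. -/
def Xrep (K : Type) [Field K] (n : ℕ) (ε : ℕ → Bool) (i j : ℕ) : Rep K n ε where
  V m := XV K n i j m
  instAdd _ := inferInstance
  instMod _ := inferInstance
  instFin _ := inferInstance
  triv m hm := by
    have hneg : ¬ (i + 1 ≤ m ∧ m ≤ j ∧ m ≤ n) := by omega
    have hbot : XV K n i j m = ⊥ := by unfold XV; rw [if_neg hneg]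
    show Subsingleton (XV K n i j m)
    rw [hbot]
    infer_instance
  φ m := Xφ K n ε i j m

variable {K : Type} [Field K]

/-- `Hom(A, B) = 0`. -/
def homZero {n : ℕ} {ε : ℕ → Bool} (A B : Rep K n ε) : Prop :=
  ∀ θ : RepHom A B, ∀ m, θ.app m = 0

/-- `Hom(A, B) ≠ 0`. -/
def homNonzero {n : ℕ} {ε : ℕ → Bool} (A B : Rep K n ε) : Prop :=
  ∃ θ : RepHom A B, ∃ m, θ.app m ≠ 0

/-- `0 → B → E → A → 0` is a short exact sequence. -/
def IsSES {n : ℕ} {ε : ℕ → Bool} {B E A : Rep K n ε}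
    (f : RepHom B E) (g : RepHom E A) : Prop :=
  (∀ m, Function.Injective (f.app m)) ∧ (∀ m, Function.Surjective (g.app m)) ∧
    (∀ m, LinearMap.range (f.app m) = LinearMap.ker (g.app m))

/-- The short exact sequence `0 → B → E → A → 0` splits. -/
def Splits {n : ℕ} {ε : ℕ → Bool} {E A : Rep K n ε} (g : RepHom E A) : Prop :=
  ∃ s : RepHom A E, ∀ m, (g.app m).comp (s.app m) = LinearMap.id

/-- `Ext¹(A, B) ≠ 0`: there is a nonsplit short exact sequence `0 → B → E → A → 0`. -/
def extNonzero {n : ℕ} {ε : ℕ → Bool} (A B : Rep K n ε) : Prop :=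
  ∃ (E : Rep K n ε) (f : RepHom B E) (g : RepHom E A), IsSES f g ∧ ¬ Splits g

/-- `Ext¹(A, B) = 0`. -/
def extZero {n : ℕ} {ε : ℕ → Bool} (A B : Rep K n ε) : Prop := ¬ extNonzero A B

/-- `(U, V)` is an exceptional pair: `Hom(V,U) = 0` and `Ext¹(V,U) = 0`. -/
def ExcPair {n : ℕ} {ε : ℕ → Bool} (U V : Rep K n ε) : Prop := homZero V U ∧ extZero V U

/-!
A morphism `X_{i,j} → X_{k,l}` acts by a scalar at each vertex of the overlap of the two supports
and by zero elsewhere. The overlap is an interval and the arrows inside it are identities in both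
representations, so the scalar is constant on it. A nonzero constant is a morphism exactly when no
arrow from the first support to the second enters or leaves the overlap. For interlaced supports
only the arrows `a_k` and `a_j` cross the boundary of the overlap `{k+1, …, j}`. Reversing all
arrows exchanges the two directions of morphisms.
-/

/-- The set of vertices where `X_{i,j}` is nonzero. The bound `n` only matters when `j > n`, a case
that the definition of `XV` truncates. -/
def XSupport (n i j : ℕ) : Set ℕ := Set.Icc (i + 1) (min j n)

section Overlap

variable {n i j k l m : ℕ} {ε : ℕ → Bool}

theorem mem_XSupport : m ∈ XSupport n i j ↔ i + 1 ≤ m ∧ m ≤ j ∧ m ≤ n := by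
  rw [XSupport, Set.mem_Icc, le_min_iff]

theorem mem_XV_iff {x : K} : x ∈ XV K n i j m ↔ m ∈ XSupport n i j ∨ x = 0 := by
  rw [mem_XSupport, XV]
  split_ifs with h
  · exact iff_of_true Submodule.mem_top (Or.inl h)
  · rw [Submodule.mem_bot, or_iff_right h]

theorem coe_XV_eq_zero (hm : m ∉ XSupport n i j) (x : XV K n i j m) : (x : K) = 0 :=
  (mem_XV_iff.mp x.2).resolve_left hm

theorem coe_Xφ (hm : atgt ε m ∈ XSupport n i j) (x : XV K n i j (asrc ε m)) :
    (Xφ K n ε i j m x : K) = x := by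
  rw [Xφ, dif_pos (mem_XSupport.mp hm)]
  rfl

/-- The overlap of the supports of `X_{i,j}` and `X_{k,l}` is closed under predecessors within the
first support and under successors within the second. For a nonempty overlap this says that the
interval representation on it is a quotient of `X_{i,j}` and a subrepresentation of `X_{k,l}`. -/
def OverlapCompatible (n : ℕ) (ε : ℕ → Bool) (i j k l : ℕ) : Prop :=
  ∀ m, asrc ε m ∈ XSupport n i j → atgt ε m ∈ XSupport n k l →
    (atgt ε m ∈ XSupport n i j ↔ asrc ε m ∈ XSupport n k l)

open Classical in
/-- The map `X_{i,j} → X_{k,l}` at the vertex `m` that is the identity on the overlap of the two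
supports and zero elsewhere. -/
noncomputable def overlapMap (K : Type) [Field K] (n i j k l m : ℕ) :
    XV K n i j m →ₗ[K] XV K n k l m :=
  if hm : m ∈ XSupport n k l then
    LinearMap.codRestrict _ (XV K n i j m).subtype fun _ => mem_XV_iff.mpr (Or.inl hm)
  else 0

theorem coe_overlapMap (hm : m ∈ XSupport n k l) (x : XV K n i j m) :
    (overlapMap K n i j k l m x : K) = x := by
  rw [overlapMap, dif_pos hm]
  rfl

theorem overlapMap_comp_Xφ (h : OverlapCompatible n ε i j k l) (m : ℕ) :
    overlapMap K n i j k l (atgt ε m) ∘ₗ Xφ K n ε i j m =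
      Xφ K n ε k l m ∘ₗ overlapMap K n i j k l (asrc ε m) := by
  ext x
  rw [LinearMap.comp_apply, LinearMap.comp_apply]
  by_cases htgt : atgt ε m ∈ XSupport n k l
  · rw [coe_overlapMap htgt, coe_Xφ htgt]
    by_cases hsrc : asrc ε m ∈ XSupport n i j
    · by_cases htgt' : atgt ε m ∈ XSupport n i j
      · rw [coe_Xφ htgt', coe_overlapMap ((h m hsrc htgt).mp htgt')]
      · rw [coe_XV_eq_zero htgt', coe_XV_eq_zero fun hsrc' => htgt' ((h m hsrc htgt).mpr hsrc')]
    · have hx : x = 0 := Subtype.ext (coe_XV_eq_zero hsrc x)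
      simp [hx]
  · rw [coe_XV_eq_zero htgt, coe_XV_eq_zero htgt]

theorem homNonzero_of_overlapCompatible (hne : (XSupport n i j ∩ XSupport n k l).Nonempty)
    (h : OverlapCompatible n ε i j k l) : homNonzero (Xrep K n ε i j) (Xrep K n ε k l) := by
  obtain ⟨m, hmij, hmkl⟩ := hne
  refine ⟨⟨overlapMap K n i j k l, overlapMap_comp_Xφ h⟩, m, fun hzero => ?_⟩
  let one : XV K n i j m := ⟨1, mem_XV_iff.mpr (Or.inl hmij)⟩
  have hone : overlapMap K n i j k l m one = 0 := LinearMap.congr_fun hzero one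
  have hcoe := coe_overlapMap hmkl one
  rw [hone] at hcoe
  exact zero_ne_one hcoe

open Classical in
/-- The generator of `X_{i,j}` at the vertex `m`: the scalar `1` on the support, and `0` off it. -/
noncomputable def XGen (K : Type) [Field K] (n i j m : ℕ) : XV K n i j m :=
  ⟨if m ∈ XSupport n i j then 1 else 0, mem_XV_iff.mpr (by split_ifs with hm <;> simp [hm])⟩

theorem coe_XGen (hm : m ∈ XSupport n i j) : (XGen K n i j m : K) = 1 :=
  if_pos hm

theorem XV_eq_smul_XGen (x : XV K n i j m) : x = (x : K) • XGen K n i j m := by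
  ext
  by_cases hm : m ∈ XSupport n i j
  · simp [coe_XGen hm]
  · rw [coe_XV_eq_zero hm, coe_XV_eq_zero hm]

/-- The scalar by which a morphism `X_{i,j} → X_{k,l}` acts at the vertex `m`. -/
noncomputable def RepHom.coeff (θ : RepHom (Xrep K n ε i j) (Xrep K n ε k l)) (m : ℕ) : K :=
  (XV K n k l m).subtype (θ.app m (XGen K n i j m))

namespace RepHom

variable (θ : RepHom (Xrep K n ε i j) (Xrep K n ε k l))

theorem mem_of_coeff_ne_zero (hm : θ.coeff m ≠ 0) : m ∈ XSupport n i j ∩ XSupport n k l := by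
  constructor <;> by_contra hmem
  · have hgen : XGen K n i j m = 0 := Subtype.ext (coe_XV_eq_zero hmem _)
    exact hm (by rw [coeff, hgen]; exact congrArg Subtype.val (map_zero (θ.app m)))
  · exact hm (coe_XV_eq_zero hmem _)

theorem app_eq_zero_of_coeff_eq_zero (hm : θ.coeff m = 0) : θ.app m = 0 := by
  have hgen : θ.app m (XGen K n i j m) = 0 := Subtype.ext hm
  refine LinearMap.ext fun (x : XV K n i j m) => ?_
  calc θ.app m x = θ.app m ((x : K) • XGen K n i j m) := congrArg _ (XV_eq_smul_XGen x)
    _ = (x : K) • θ.app m (XGen K n i j m) := map_smul (θ.app m) _ _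
    _ = 0 := by rw [hgen, smul_zero]

theorem coeff_atgt_eq_coeff_asrc (hsrc : asrc ε m ∈ XSupport n i j)
    (htgt : atgt ε m ∈ XSupport n k l) : θ.coeff (atgt ε m) = θ.coeff (asrc ε m) := by
  have hgen : Xφ K n ε i j m (XGen K n i j (asrc ε m)) = XGen K n i j (atgt ε m) := by
    ext
    by_cases htgt' : atgt ε m ∈ XSupport n i j
    · rw [coe_Xφ htgt', coe_XGen hsrc, coe_XGen htgt']
    · rw [coe_XV_eq_zero htgt', coe_XV_eq_zero htgt']
  have hcomm : θ.app (atgt ε m) (Xφ K n ε i j m (XGen K n i j (asrc ε m))) =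
      Xφ K n ε k l m (θ.app (asrc ε m) (XGen K n i j (asrc ε m))) :=
    LinearMap.congr_fun (θ.comm m) (XGen K n i j (asrc ε m))
  rw [hgen] at hcomm
  exact (congrArg Subtype.val hcomm).trans (coe_Xφ htgt _)

theorem coeff_succ_eq_coeff (hm : m ∈ XSupport n i j ∩ XSupport n k l)
    (hsucc : m + 1 ∈ XSupport n i j ∩ XSupport n k l) : θ.coeff (m + 1) = θ.coeff m := by
  have harrow := θ.coeff_atgt_eq_coeff_asrc (m := m)
  cases hε : ε m <;> simp only [asrc, atgt, hε, if_true, Bool.false_eq_true, if_false] at harrow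
  · exact (harrow hsucc.1 hm.2).symm
  · exact harrow hm.1 hsucc.2

end RepHom

theorem eq_of_mem_ordConnected_of_succ_eq {α : Type*} {s : Set ℕ} (hs : s.OrdConnected)
    {f : ℕ → α} (hf : ∀ m ∈ s, m + 1 ∈ s → f (m + 1) = f m) {a b : ℕ} (ha : a ∈ s) (hb : b ∈ s) :
    f a = f b := by
  wlog hab : a ≤ b generalizing a b
  · exact (this hb ha (le_of_not_ge hab)).symm
  induction b, hab using Nat.le_induction with
  | base => rfl
  | succ b hab ih =>
    have hb' : b ∈ s := hs.out ha hb ⟨hab, b.le_succ⟩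
    exact (ih hb').trans (hf b hb' hb).symm

theorem RepHom.coeff_eq_coeff (θ : RepHom (Xrep K n ε i j) (Xrep K n ε k l)) {a b : ℕ}
    (ha : a ∈ XSupport n i j ∩ XSupport n k l) (hb : b ∈ XSupport n i j ∩ XSupport n k l) :
    θ.coeff a = θ.coeff b :=
  eq_of_mem_ordConnected_of_succ_eq (Set.ordConnected_Icc.inter Set.ordConnected_Icc)
    (fun _ => θ.coeff_succ_eq_coeff) ha hb

theorem homNonzero_Xrep_iff :
    homNonzero (Xrep K n ε i j) (Xrep K n ε k l) ↔
      (XSupport n i j ∩ XSupport n k l).Nonempty ∧ OverlapCompatible n ε i j k l := by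
  refine ⟨?_, fun ⟨hne, h⟩ => homNonzero_of_overlapCompatible hne h⟩
  rintro ⟨θ, v, hv⟩
  have hcoeff : θ.coeff v ≠ 0 := mt θ.app_eq_zero_of_coeff_eq_zero hv
  have hmem := θ.mem_of_coeff_ne_zero hcoeff
  have hiff (m : ℕ) : m ∈ XSupport n i j ∩ XSupport n k l ↔ θ.coeff m ≠ 0 :=
    ⟨fun hm => θ.coeff_eq_coeff hmem hm ▸ hcoeff, θ.mem_of_coeff_ne_zero⟩
  refine ⟨⟨v, hmem⟩, fun m hsrc htgt => ?_⟩
  calc atgt ε m ∈ XSupport n i j ↔ atgt ε m ∈ XSupport n i j ∩ XSupport n k l :=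
        (and_iff_left htgt).symm
    _ ↔ asrc ε m ∈ XSupport n i j ∩ XSupport n k l := by
        rw [hiff, hiff, θ.coeff_atgt_eq_coeff_asrc hsrc htgt]
    _ ↔ asrc ε m ∈ XSupport n k l := and_iff_right hsrc

theorem asrc_not : asrc (fun m => !ε m) m = atgt ε m := by
  cases hε : ε m <;> simp [asrc, atgt, hε]

theorem atgt_not : atgt (fun m => !ε m) m = asrc ε m := by
  cases hε : ε m <;> simp [asrc, atgt, hε]

theorem overlapCompatible_not_iff :
    OverlapCompatible n (fun m => !ε m) i j k l ↔ OverlapCompatible n ε k l i j := by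
  simp only [OverlapCompatible, asrc_not, atgt_not]
  exact forall_congr' fun _ => ⟨fun h hs ht => (h ht hs).symm, fun h hs ht => (h ht hs).symm⟩

theorem overlapCompatible_interlaced_iff (hik : i < k) (hkj : k < j) (hjl : j < l) (hjn : j < n) :
    OverlapCompatible n ε i j k l ↔ ε k = false ∧ ε j = false := by
  simp only [OverlapCompatible, mem_XSupport]
  constructor
  · intro h
    have harrowk := h k
    have harrowj := h j
    constructor <;> rw [← Bool.not_eq_true] <;> intro hε
    · simp only [asrc, atgt, hε, if_true] at harrowk
      omega
    · simp only [asrc, atgt, hε, if_true] at harrowj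
      omega
  · rintro ⟨hεk, hεj⟩ m
    cases hε : ε m <;> simp only [asrc, atgt, hε, if_true, Bool.false_eq_true, if_false]
    · omega
    · have hmk : m ≠ k := fun h => by simp [h, hεk] at hε
      have hmj : m ≠ j := fun h => by simp [h, hεj] at hε
      omega

end Overlap

/-- Lemma 3.9 (interlaced case), Hom part. -/
theorem hom_interlaced (K : Type) [Field K] (n : ℕ) (ε : ℕ → Bool) (i k j l : ℕ)
    (h1 : i < k) (h2 : k < j) (h3 : j < l) (h4 : l ≤ n) :
    (homNonzero (Xrep K n ε i j) (Xrep K n ε k l) ↔ ε k = false ∧ ε j = false) ∧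
    (homNonzero (Xrep K n ε k l) (Xrep K n ε i j) ↔ ε k = true ∧ ε j = true) := by
  have hjn : j < n := h3.trans_le h4
  have hne : (XSupport n i j ∩ XSupport n k l).Nonempty :=
    ⟨j, mem_XSupport.mpr ⟨h1.trans h2, le_rfl, hjn.le⟩, mem_XSupport.mpr ⟨h2, h3.le, hjn.le⟩⟩
  constructor
  · rw [homNonzero_Xrep_iff, and_iff_right hne, overlapCompatible_interlaced_iff h1 h2 h3 hjn]
  · rw [homNonzero_Xrep_iff, Set.inter_comm, and_iff_right hne, ← overlapCompatible_not_iff,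
      overlapCompatible_interlaced_iff h1 h2 h3 hjn, Bool.not_eq_false', Bool.not_eq_false']

end ESPaper
end

section
/- Assume 0 ≤ i < k < ℓ < j ≤ n. Then Ext^1(X_{i,j}, X_{k,ℓ}) ≠ 0 if and only if ε_k = + and ε_ℓ = −; and Ext^1(X_{k,ℓ}, X_{i,j}) ≠ 0 if and only if ε_k = − and ε_ℓ = +. -/
namespace ESPaper

variable {K : Type} [Field K]

/-!
For representations of a quiver, `Ext¹(A, B)` is the cokernel of the map sending a family of linear
maps `h m : A m → B m` to the family `h t ∘ A_a - B_a ∘ h s`, indexed by the arrows `a : s → t`.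
If `A` and `B` are the interval representations on `I = (i, j]` and `J = (k, l]`, this is a question
about scalars: a function `h` supported on `I ∩ J = (max i k, min j l]` is mapped to its
differences along the arrows from `I` to `J`, all of which are among the `a_m` with
`max i k ≤ m ≤ min j l`. If one of these `a_m` does not go from `I` to `J`, prescribed differences
can be integrated from both ends without crossing the gap; if all of them do, the signed
differences of `h` telescope to zero, so not every family is attained. For nested intervals, only
the two arrows at the ends of the smaller interval can fail to go from `I` to `J`.
-/

section ForwardDifference

open Finset

variable {G : Type*} [AddCommGroup G] {a b : ℕ}

theorem exists_fwdDiff_eq_of_ne {p : ℕ} (hp : p ∈ Set.Icc a b) (c : ℕ → G) :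
    ∃ h : ℕ → G, (∀ m ∉ Set.Ioc a b, h m = 0) ∧
      ∀ m ∈ Set.Icc a b, m ≠ p → h (m + 1) - h m = c m := by
  obtain ⟨hap, hpb⟩ := hp
  refine ⟨fun m => if m ≤ p then ∑ q ∈ Ico a m, c q else -∑ q ∈ Ico m (b + 1), c q, ?_, ?_⟩
  · intro m hm
    rcases le_or_gt m a with hma | hma
    · simp [hma, hma.trans hap]
    · have hbm : b < m := by simpa [hma] using hm
      simp [hpb.trans_lt hbm, Nat.succ_le_of_lt hbm]
  · rintro m ⟨ham, hmb⟩ hmp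
    rcases lt_or_gt_of_ne hmp with hlt | hgt
    · simp [Nat.succ_le_of_lt hlt, hlt.le, sum_Ico_succ_top ham]
    · simp [hgt.not_ge, hgt.not_gt, sum_eq_sum_Ico_succ_bot (Nat.lt_succ_of_le hmb)]

theorem sum_fwdDiff_eq_zero {h : ℕ → G} (hab : a ≤ b) (hh : ∀ m ∉ Set.Ioc a b, h m = 0) :
    ∑ m ∈ Ico a (b + 1), (h (m + 1) - h m) = 0 := by
  rw [sum_Ico_sub h (by lia), hh (b + 1) (by simp), hh a (by simp), sub_zero]

theorem forall_exists_fwdDiff_eq_iff [Nontrivial G] {S : Set ℕ} (hS : S ⊆ Set.Icc a b) :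
    (∀ c : ℕ → G, ∃ h : ℕ → G, (∀ m ∉ Set.Ioc a b, h m = 0) ∧
      ∀ m ∈ S, h (m + 1) - h m = c m) ↔ ¬(a ≤ b ∧ Set.Icc a b ⊆ S) := by
  constructor
  · rintro hsolve ⟨hab, habS⟩
    obtain ⟨x, hx⟩ := exists_ne (0 : G)
    obtain ⟨h, hsupp, hdiff⟩ := hsolve (Pi.single a x)
    refine hx ?_
    calc x = ∑ m ∈ Ico a (b + 1), Pi.single (M := fun _ => G) a x m := by
          rw [sum_pi_single', if_pos (mem_Ico.2 ⟨le_rfl, Nat.lt_succ_of_le hab⟩)]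
      _ = ∑ m ∈ Ico a (b + 1), (h (m + 1) - h m) :=
          sum_congr rfl fun m hm => (hdiff m (habS (by simpa [Nat.lt_succ_iff] using hm))).symm
      _ = 0 := sum_fwdDiff_eq_zero hab hsupp
  · intro hmissing c
    rcases lt_or_ge b a with hba | hab
    · refine ⟨0, fun _ _ => rfl, fun m hm => ?_⟩
      exact absurd (hS hm) (by simp [hba])
    · obtain ⟨p, hp, hpS⟩ := Set.not_subset.1 fun habS => hmissing ⟨hab, habS⟩
      obtain ⟨h, hsupp, hdiff⟩ := exists_fwdDiff_eq_of_ne hp c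
      exact ⟨h, hsupp, fun m hm => hdiff m (hS hm) (ne_of_mem_of_not_mem hm hpS)⟩

end ForwardDifference

section Extensions

variable {n : ℕ} {ε : ℕ → Bool} {A B E : Rep K n ε}

/-- The differential of the standard complex computing `Hom(A, B)` (its kernel) and `Ext¹(A, B)`
(its cokernel), as a plain function. -/
def coboundary (A B : Rep K n ε) (h : ∀ m, A.V m →ₗ[K] B.V m) (m : ℕ) :
    A.V (asrc ε m) →ₗ[K] B.V (atgt ε m) :=
  h (atgt ε m) ∘ₗ A.φ m - B.φ m ∘ₗ h (asrc ε m)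

/-- The middle term of the extension of `A` by `B` with cocycle `c`: the arrow maps are those of
`B ⊕ A` with `c` added as an off-diagonal block. -/
def cocycleExt (c : ∀ m, A.V (asrc ε m) →ₗ[K] B.V (atgt ε m)) : Rep K n ε where
  V m := B.V m × A.V m
  triv m hm := by
    have := A.triv m hm
    have := B.triv m hm
    infer_instance
  φ m := ((B.φ m).coprod (c m)).prod (A.φ m ∘ₗ LinearMap.snd K _ _)

/-- The inclusion of the subobject `B` into the extension with cocycle `c`. -/
def cocycleExtInl (c : ∀ m, A.V (asrc ε m) →ₗ[K] B.V (atgt ε m)) : RepHom B (cocycleExt c) where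
  app m := LinearMap.inl K (B.V m) (A.V m)
  comm m := LinearMap.ext fun x => Prod.ext
    (show B.φ m x = B.φ m x + c m 0 by rw [map_zero, add_zero])
    (show 0 = A.φ m 0 from (map_zero _).symm)

/-- The projection of the extension with cocycle `c` onto the quotient `A`. -/
def cocycleExtSnd (c : ∀ m, A.V (asrc ε m) →ₗ[K] B.V (atgt ε m)) : RepHom (cocycleExt c) A where
  app m := LinearMap.snd K (B.V m) (A.V m)
  comm _ := rfl

theorem isSES_cocycleExt (c : ∀ m, A.V (asrc ε m) →ₗ[K] B.V (atgt ε m)) :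
    IsSES (cocycleExtInl c) (cocycleExtSnd c) :=
  ⟨fun _ => LinearMap.inl_injective, fun _ => LinearMap.snd_surjective,
    fun m => LinearMap.range_inl K (B.V m) (A.V m)⟩

theorem exists_coboundary_eq_of_splits {c : ∀ m, A.V (asrc ε m) →ₗ[K] B.V (atgt ε m)}
    (hc : Splits (cocycleExtSnd c)) : ∃ h, coboundary A B h = c := by
  obtain ⟨s, hs⟩ := hc
  refine ⟨fun m => LinearMap.fst K (B.V m) (A.V m) ∘ₗ s.app m, ?_⟩
  ext m x
  have hsnd : (s.app (asrc ε m) x).2 = x := LinearMap.congr_fun (hs _) x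
  have hfst : (s.app (atgt ε m) (A.φ m x)).1 =
      B.φ m (s.app (asrc ε m) x).1 + c m (s.app (asrc ε m) x).2 :=
    congrArg Prod.fst (LinearMap.congr_fun (s.comm m) x)
  rw [hsnd] at hfst
  exact sub_eq_of_eq_add' hfst

theorem exists_comp_eq_of_range_le {U V W : Type*} [AddCommGroup U] [AddCommGroup V]
    [AddCommGroup W] [Module K U] [Module K V] [Module K W] {f : V →ₗ[K] W} {u : U →ₗ[K] W}
    (h : LinearMap.range u ≤ LinearMap.range f) : ∃ c : U →ₗ[K] V, f ∘ₗ c = u := by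
  obtain ⟨r, hr⟩ := f.rangeRestrict.exists_rightInverse_of_surjective f.range_rangeRestrict
  refine ⟨r ∘ₗ u.codRestrict _ fun x => h ⟨x, rfl⟩, ?_⟩
  ext x
  exact congrArg Subtype.val (LinearMap.congr_fun hr _)

theorem exists_cocycle_of_isSES {f : RepHom B E} {g : RepHom E A} (hfg : IsSES f g)
    {σ : ∀ m, A.V m →ₗ[K] E.V m} (hσ : ∀ m, g.app m ∘ₗ σ m = LinearMap.id) :
    ∃ c : ∀ m, A.V (asrc ε m) →ₗ[K] B.V (atgt ε m),
      ∀ m, f.app (atgt ε m) ∘ₗ c m = E.φ m ∘ₗ σ (asrc ε m) - σ (atgt ε m) ∘ₗ A.φ m := by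
  refine Classical.skolem.1 fun m => exists_comp_eq_of_range_le ?_
  rw [hfg.2.2, LinearMap.range_le_ker_iff]
  calc g.app _ ∘ₗ (E.φ m ∘ₗ σ _ - σ _ ∘ₗ A.φ m)
      = (g.app _ ∘ₗ E.φ m) ∘ₗ σ _ - (g.app _ ∘ₗ σ _) ∘ₗ A.φ m := LinearMap.comp_sub _ _ _
    _ = A.φ m ∘ₗ (g.app _ ∘ₗ σ _) - (g.app _ ∘ₗ σ _) ∘ₗ A.φ m := by
        rw [g.comm, LinearMap.comp_assoc]
    _ = 0 := by rw [hσ, hσ, LinearMap.comp_id, LinearMap.id_comp, sub_self]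

theorem splits_of_coboundary_surjective {f : RepHom B E} {g : RepHom E A} (hfg : IsSES f g)
    (hsurj : Function.Surjective (coboundary A B)) : Splits g := by
  choose σ hσ using fun m =>
    (g.app m).exists_rightInverse_of_surjective (LinearMap.range_eq_top.2 (hfg.2.1 m))
  obtain ⟨c, hc⟩ := exists_cocycle_of_isSES hfg hσ
  obtain ⟨h, rfl⟩ := hsurj c
  refine ⟨⟨fun m => σ m + f.app m ∘ₗ h m, fun m => ?_⟩, fun m => ?_⟩
  · have hdefect : f.app _ ∘ₗ h _ ∘ₗ A.φ m - E.φ m ∘ₗ f.app _ ∘ₗ h _ =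
        E.φ m ∘ₗ σ _ - σ _ ∘ₗ A.φ m := by
      rw [← hc, coboundary, LinearMap.comp_sub, ← LinearMap.comp_assoc _ (B.φ m), f.comm,
        LinearMap.comp_assoc]
    rw [LinearMap.add_comp, LinearMap.comp_add, LinearMap.comp_assoc, add_comm]
    exact sub_eq_sub_iff_add_eq_add.1 hdefect
  · have hgf : g.app m ∘ₗ f.app m = 0 := LinearMap.range_le_ker_iff.1 (hfg.2.2 m).le
    rw [LinearMap.comp_add, hσ, ← LinearMap.comp_assoc, hgf, LinearMap.zero_comp, add_zero]

theorem extNonzero_iff_not_surjective_coboundary :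
    extNonzero A B ↔ ¬Function.Surjective (coboundary A B) := by
  constructor
  · rintro ⟨E, f, g, hfg, hsplits⟩ hsurj
    exact hsplits (splits_of_coboundary_surjective hfg hsurj)
  · intro hnot
    obtain ⟨c, hc⟩ := not_forall.1 hnot
    exact ⟨_, _, _, isSES_cocycleExt c, fun hsplits => hc (exists_coboundary_eq_of_splits hsplits)⟩

end Extensions

section Intervals

variable {n : ℕ} {ε : ℕ → Bool} {i j k l m : ℕ}

theorem exists_forall_coe_eq_mul {U W : Submodule K K} (f : U →ₗ[K] W) :
    ∃ a : K, ∀ x, (f x : K) = a * x := by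
  obtain ⟨g, hg⟩ := (W.subtype ∘ₗ f).exists_extend
  refine ⟨g 1, fun x => ?_⟩
  calc (f x : K) = g (x : K) := (LinearMap.congr_fun hg x).symm
    _ = g 1 * x := by rw [mul_comm, ← smul_eq_mul, ← map_smul, smul_eq_mul, mul_one]

theorem mem_XV (hj : j ≤ n) (hm : m ∈ Set.Ioc i j) (x : K) : x ∈ XV K n i j m := by
  rw [XV, if_pos ⟨hm.1, hm.2, hm.2.trans hj⟩]
  exact Submodule.mem_top

theorem XV_eq_bot (hm : m ∉ Set.Ioc i j) : XV K n i j m = ⊥ :=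
  if_neg fun h => hm ⟨h.1, h.2.1⟩

theorem subsingleton_XV (hm : m ∉ Set.Ioc i j) : Subsingleton (XV K n i j m) := by
  rw [XV_eq_bot hm]
  infer_instance

theorem coe_Xφ_of_mem (hj : j ≤ n) (hm : atgt ε m ∈ Set.Ioc i j)
    (x : XV K n i j (asrc ε m)) : (Xφ K n ε i j m x : K) = x := by
  rw [Xφ, dif_pos ⟨hm.1, hm.2, hm.2.trans hj⟩]
  rfl

theorem exists_scalar_of_XV_hom (f : XV K n i j m →ₗ[K] XV K n k l m) :
    ∃ a : K, (m ∉ Set.Ioc i j ∩ Set.Ioc k l → a = 0) ∧ ∀ x, (f x : K) = a * x := by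
  by_cases hm : m ∈ Set.Ioc i j ∩ Set.Ioc k l
  · obtain ⟨a, ha⟩ := exists_forall_coe_eq_mul f
    exact ⟨a, fun h => absurd hm h, ha⟩
  · refine ⟨0, fun _ => rfl, fun x => ?_⟩
    have hfx : f x = 0 := by
      by_cases hmi : m ∈ Set.Ioc i j
      · have := subsingleton_XV (K := K) (n := n) fun hmk => hm ⟨hmi, hmk⟩
        exact Subsingleton.elim _ _
      · have := subsingleton_XV (K := K) (n := n) hmi
        rw [Subsingleton.elim x 0, map_zero]
    simp [hfx]

theorem exists_XV_hom_of_scalar {U : Submodule K K} (hl : l ≤ n) {a : K}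
    (ha : m ∉ Set.Ioc k l → a = 0) : ∃ f : U →ₗ[K] XV K n k l m, ∀ x, (f x : K) = a * x := by
  refine ⟨(a • LinearMap.id : K →ₗ[K] K).restrict fun x _ => ?_, fun x => rfl⟩
  by_cases hm : m ∈ Set.Ioc k l
  · exact mem_XV hl hm _
  · simp [ha hm]

/-- The arrows `a_m` of `Q_ε`, recorded by their index `m`, with source in `I` and target in `J`:
only on these can a cocycle between the interval representations on `I` and `J` be nonzero. -/
def arrowsBetween (ε : ℕ → Bool) (I J : Set ℕ) : Set ℕ :=
  {m | asrc ε m ∈ I ∧ atgt ε m ∈ J}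

theorem XV_hom_arrow_ext {f g : XV K n i j (asrc ε m) →ₗ[K] XV K n k l (atgt ε m)}
    (h : m ∈ arrowsBetween ε (Set.Ioc i j) (Set.Ioc k l) → ∀ x, (f x : K) = g x) : f = g := by
  ext x
  by_cases hs : asrc ε m ∈ Set.Ioc i j
  · by_cases ht : atgt ε m ∈ Set.Ioc k l
    · exact h ⟨hs, ht⟩ x
    · have := subsingleton_XV (K := K) (n := n) ht
      rw [Subsingleton.elim (f x) (g x)]
  · have := subsingleton_XV (K := K) (n := n) hs
    rw [Subsingleton.elim x 0, map_zero, map_zero]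

theorem coe_coboundary_Xrep_apply (hj : j ≤ n) (hl : l ≤ n)
    (hm : m ∈ arrowsBetween ε (Set.Ioc i j) (Set.Ioc k l))
    {H : ∀ m, XV K n i j m →ₗ[K] XV K n k l m} {h : ℕ → K}
    (hsupp : ∀ m ∉ Set.Ioc i j ∩ Set.Ioc k l, h m = 0) (hH : ∀ m x, (H m x : K) = h m * x)
    (x : XV K n i j (asrc ε m)) :
    (XV K n k l (atgt ε m)).subtype (coboundary (Xrep K n ε i j) (Xrep K n ε k l) H m x) =
      (h (atgt ε m) - h (asrc ε m)) * x := by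
  have hφ : h (atgt ε m) * (Xφ K n ε i j m x : K) = h (atgt ε m) * x := by
    by_cases ht : atgt ε m ∈ Set.Ioc i j
    · rw [coe_Xφ_of_mem hj ht]
    · rw [hsupp _ fun hm => ht hm.1, zero_mul, zero_mul]
  calc (XV K n k l (atgt ε m)).subtype (coboundary (Xrep K n ε i j) (Xrep K n ε k l) H m x)
      = (H (atgt ε m) (Xφ K n ε i j m x) : K) - (Xφ K n ε k l m (H (asrc ε m) x) : K) := rfl
    _ = (h (atgt ε m) - h (asrc ε m)) * x := by
        rw [coe_Xφ_of_mem hl hm.2, hH, hH, hφ, sub_mul]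

theorem surjective_coboundary_Xrep_iff (hj : j ≤ n) (hl : l ≤ n) :
    Function.Surjective (coboundary (Xrep K n ε i j) (Xrep K n ε k l)) ↔
      ∀ c : ℕ → K, ∃ h : ℕ → K, (∀ m ∉ Set.Ioc i j ∩ Set.Ioc k l, h m = 0) ∧
        ∀ m ∈ arrowsBetween ε (Set.Ioc i j) (Set.Ioc k l),
          h (atgt ε m) - h (asrc ε m) = c m := by
  constructor
  · intro hsurj c
    choose C hC using fun m => exists_XV_hom_of_scalar (U := XV K n i j (asrc ε m)) hl
      (Set.indicator_of_notMem (s := Set.Ioc k l) (a := atgt ε m) · fun _ => c m)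
    obtain ⟨H, hHC⟩ := hsurj C
    choose h hsupp hH using fun m => exists_scalar_of_XV_hom (H m)
    refine ⟨h, hsupp, fun m hm => ?_⟩
    have hone := coe_coboundary_Xrep_apply hj hl hm hsupp hH ⟨1, mem_XV hj hm.1 1⟩
    rw [hHC] at hone
    calc h (atgt ε m) - h (asrc ε m) = (C m ⟨1, mem_XV hj hm.1 1⟩ : K) :=
          (mul_one _).symm.trans hone.symm
      _ = c m := by rw [hC, Set.indicator_of_mem hm.2, mul_one]
  · intro hsolve C
    choose c hc using fun m =>
      exists_forall_coe_eq_mul (U := XV K n i j (asrc ε m)) (W := XV K n k l (atgt ε m)) (C m)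
    obtain ⟨h, hsupp, hh⟩ := hsolve c
    choose H hH using fun m =>
      exists_XV_hom_of_scalar (U := XV K n i j m) hl fun hm => hsupp m fun hm' => hm hm'.2
    refine ⟨H, funext fun m => XV_hom_arrow_ext fun hm x => ?_⟩
    rw [hc, ← hh m hm]
    exact coe_coboundary_Xrep_apply hj hl hm hsupp hH x

theorem forall_exists_arrowDiff_eq_iff_fwdDiff_eq {G : Type*} [AddCommGroup G] {P : (ℕ → G) → Prop}
    {S : Set ℕ} :
    (∀ c : ℕ → G, ∃ h : ℕ → G, P h ∧ ∀ m ∈ S, h (atgt ε m) - h (asrc ε m) = c m) ↔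
      ∀ c : ℕ → G, ∃ h : ℕ → G, P h ∧ ∀ m ∈ S, h (m + 1) - h m = c m := by
  let sign (m : ℕ) : ℤˣ := if ε m then 1 else -1
  have harrow (h : ℕ → G) (m : ℕ) :
      h (atgt ε m) - h (asrc ε m) = sign m • (h (m + 1) - h m) := by
    cases hε : ε m <;> simp [sign, atgt, asrc, hε]
  simp only [harrow, smul_eq_iff_eq_inv_smul]
  exact (Equiv.piCongrRight fun m => MulAction.toPerm (sign m)⁻¹).forall_congr fun c => Iff.rfl

theorem arrowsBetween_Ioc_subset :
    arrowsBetween ε (Set.Ioc i j) (Set.Ioc k l) ⊆ Set.Icc (max i k) (min j l) := by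
  rintro m ⟨hs, ht⟩
  grind [asrc, atgt]

theorem extNonzero_Xrep_iff (hj : j ≤ n) (hl : l ≤ n) :
    extNonzero (Xrep K n ε i j) (Xrep K n ε k l) ↔
      max i k ≤ min j l ∧
        Set.Icc (max i k) (min j l) ⊆ arrowsBetween ε (Set.Ioc i j) (Set.Ioc k l) := by
  rw [extNonzero_iff_not_surjective_coboundary, surjective_coboundary_Xrep_iff hj hl,
    Set.Ioc_inter_Ioc, forall_exists_arrowDiff_eq_iff_fwdDiff_eq,
    forall_exists_fwdDiff_eq_iff arrowsBetween_Ioc_subset, not_not]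

theorem asrc_eq_atgt_not : asrc ε m = atgt (fun q => !ε q) m := by
  cases hε : ε m <;> simp [asrc, atgt, hε]

theorem atgt_mem_Ioc_of_mem_Icc (hik : i < k) (hlj : l < j) (hm : m ∈ Set.Icc k l) :
    atgt ε m ∈ Set.Ioc i j := by
  grind [atgt]

theorem forall_atgt_mem_Ioc_iff (hkl : k ≤ l) :
    (∀ m ∈ Set.Icc k l, atgt ε m ∈ Set.Ioc k l) ↔ ε k = true ∧ ε l = false := by
  constructor
  · intro h
    have hk : k < atgt ε k := (h k ⟨le_rfl, hkl⟩).1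
    have hl : atgt ε l ≤ l := (h l ⟨hkl, le_rfl⟩).2
    constructor <;> grind [atgt]
  · rintro ⟨hk, hl⟩ m ⟨hkm, hml⟩
    rcases hkm.eq_or_lt with rfl | hkm
    · have hne : k ≠ l := by
        rintro rfl
        simp [hk] at hl
      simpa [atgt, hk] using hml.lt_of_ne hne
    · rcases hml.eq_or_lt with rfl | hml
      · simpa [atgt, hl] using hkm
      · grind [atgt]

theorem Icc_subset_arrowsBetween_inner_iff (hik : i < k) (hkl : k ≤ l) (hlj : l < j) :
    Set.Icc k l ⊆ arrowsBetween ε (Set.Ioc i j) (Set.Ioc k l) ↔ ε k = true ∧ ε l = false := by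
  have hsrc : ∀ m ∈ Set.Icc k l, asrc ε m ∈ Set.Ioc i j := fun m hm =>
    asrc_eq_atgt_not ▸ atgt_mem_Ioc_of_mem_Icc hik hlj hm
  rw [← forall_atgt_mem_Ioc_iff hkl]
  exact forall₂_congr fun m hm => and_iff_right (hsrc m hm)

theorem Icc_subset_arrowsBetween_outer_iff (hik : i < k) (hkl : k ≤ l) (hlj : l < j) :
    Set.Icc k l ⊆ arrowsBetween ε (Set.Ioc k l) (Set.Ioc i j) ↔ ε k = false ∧ ε l = true := by
  have hsrc : (∀ m ∈ Set.Icc k l, asrc ε m ∈ Set.Ioc k l) ↔ ε k = false ∧ ε l = true := by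
    simpa [asrc_eq_atgt_not] using forall_atgt_mem_Ioc_iff (ε := fun q => !ε q) hkl
  rw [← hsrc]
  exact forall₂_congr fun m hm => and_iff_left (atgt_mem_Ioc_of_mem_Icc hik hlj hm)

end Intervals

/-- Lemma 3.10 (nested case), Ext part. -/
theorem ext_nested (K : Type) [Field K] (n : ℕ) (ε : ℕ → Bool) (i k l j : ℕ)
    (h1 : i < k) (h2 : k < l) (h3 : l < j) (h4 : j ≤ n) :
    (extNonzero (Xrep K n ε i j) (Xrep K n ε k l) ↔ ε k = true ∧ ε l = false) ∧
    (extNonzero (Xrep K n ε k l) (Xrep K n ε i j) ↔ ε k = false ∧ ε l = true) := by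
  have hl : l ≤ n := h3.le.trans h4
  constructor
  · rw [extNonzero_Xrep_iff h4 hl, max_eq_right h1.le, min_eq_right h3.le,
      Icc_subset_arrowsBetween_inner_iff h1 h2.le h3, and_iff_right h2.le]
  · rw [extNonzero_Xrep_iff hl h4, max_eq_left h1.le, min_eq_left h3.le,
      Icc_subset_arrowsBetween_outer_iff h1 h2.le h3, and_iff_right h2.le]

end ESPaper
end

section
/- Assume 0 ≤ i < k < j ≤ n. Then Hom(X_{i,k}, X_{k,j}) = 0 and Hom(X_{k,j}, X_{i,k}) = 0; moreover Ext^1(X_{i,k}, X_{k,j}) ≠ 0 if and only if ε_k = +, and Ext^1(X_{k,j}, X_{i,k}) ≠ 0 if and only if ε_k = −. -/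
namespace ESPaper

variable {K : Type} [Field K]

/-!
A family `δ` of linear maps `A_{s(a)} → B_{t(a)}`, one for each arrow `a`, twists the arrow maps of
`A ⊕ B` into an extension of `A` by `B`, which splits only if `δ` is a coboundary. When `A` and `B`
have disjoint supports there are no nonzero linear maps `A_m → B_m`, so all coboundaries vanish, and
`Ext¹(A, B) ≠ 0` exactly when some arrow leads from the support of `A` to that of `B`. The supports
of `X_{i,k}` and `X_{k,j}` are the adjacent intervals `(i, k]` and `(k, j]`, which only the arrow
`a_k` connects.
-/

section DisjointSupport

variable {n : ℕ} {ε : ℕ → Bool} {A B : Rep K n ε}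

/-- The support of a representation: the set of vertices whose vector space is nonzero. -/
def Rep.support (A : Rep K n ε) : Set ℕ := {m | Nontrivial (A.V m)}

theorem Rep.notMem_support {m : ℕ} : m ∉ A.support ↔ Subsingleton (A.V m) :=
  not_nontrivial_iff_subsingleton

theorem linearMap_eq_zero_of_disjoint_support (h : Disjoint A.support B.support) {m : ℕ}
    (t : A.V m →ₗ[K] B.V m) : t = 0 := by
  by_cases hA : m ∈ A.support
  · have := Rep.notMem_support.1 (h.notMem_of_mem_left hA)
    exact Subsingleton.elim _ _
  · have := Rep.notMem_support.1 hA
    exact Subsingleton.elim _ _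

theorem homZero_of_disjoint_support (h : Disjoint A.support B.support) : homZero A B :=
  fun θ m => linearMap_eq_zero_of_disjoint_support h (θ.app m)

theorem IsSES.injective_of_notMem_support {E : Rep K n ε} {f : RepHom B E} {g : RepHom E A}
    (hfg : IsSES f g) {m : ℕ} (hm : m ∉ B.support) : Function.Injective (g.app m) := by
  have := Rep.notMem_support.1 hm
  rw [← LinearMap.ker_eq_bot, ← hfg.2.2 m, Subsingleton.elim (f.app m) 0, LinearMap.range_zero]

theorem IsSES.splits_of_forall_arrow {E : Rep K n ε} {f : RepHom B E} {g : RepHom E A}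
    (hfg : IsSES f g) (h : ∀ m, asrc ε m ∈ A.support → atgt ε m ∉ B.support) : Splits g := by
  have exists_section (m : ℕ) : ∃ s : A.V m →ₗ[K] E.V m, g.app m ∘ₗ s = LinearMap.id :=
    (g.app m).exists_rightInverse_of_surjective (LinearMap.range_eq_top.2 (hfg.2.1 m))
  choose s hs using exists_section
  -- The `s m` already commute with the arrow maps: along an arrow starting outside the support of
  -- `A` there is nothing to check, and any other arrow ends where `g` is injective.
  refine ⟨⟨s, fun m => ?_⟩, hs⟩
  by_cases hsrc : asrc ε m ∈ A.support
  · have hinj := hfg.injective_of_notMem_support (h m hsrc)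
    rw [← LinearMap.cancel_left hinj]
    calc g.app (atgt ε m) ∘ₗ s (atgt ε m) ∘ₗ A.φ m
        = A.φ m := by rw [← LinearMap.comp_assoc, hs, LinearMap.id_comp]
      _ = A.φ m ∘ₗ g.app (asrc ε m) ∘ₗ s (asrc ε m) := by rw [hs, LinearMap.comp_id]
      _ = g.app (atgt ε m) ∘ₗ E.φ m ∘ₗ s (asrc ε m) := by
        rw [← LinearMap.comp_assoc, ← g.comm, LinearMap.comp_assoc]
  · have := Rep.notMem_support.1 hsrc
    exact Subsingleton.elim _ _

theorem exists_arrow_of_extNonzero (h : extNonzero A B) :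
    ∃ m, asrc ε m ∈ A.support ∧ atgt ε m ∈ B.support := by
  obtain ⟨E, f, g, hfg, hsplit⟩ := h
  by_contra! harrow
  exact hsplit (hfg.splits_of_forall_arrow harrow)

/-- The extension of `A` by `B` with cocycle `δ`: the direct sum `A ⊕ B`, whose arrow maps are
altered by adding `δ` as the component from `A` to `B`. -/
def twistedSum (A B : Rep K n ε) (δ : ∀ m, A.V (asrc ε m) →ₗ[K] B.V (atgt ε m)) :
    Rep K n ε where
  V m := A.V m × B.V m
  triv m hm := by
    have := A.triv m hm
    have := B.triv m hm
    infer_instance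
  φ m := (A.φ m ∘ₗ LinearMap.fst K _ _).prod
    (B.φ m ∘ₗ LinearMap.snd K _ _ + δ m ∘ₗ LinearMap.fst K _ _)

namespace twistedSum

variable (δ : ∀ m, A.V (asrc ε m) →ₗ[K] B.V (atgt ε m))

/-- The inclusion of `B` into the extension of `A` by `B` with cocycle `δ`. -/
def inr : RepHom B (twistedSum A B δ) where
  app m := LinearMap.inr K (A.V m) (B.V m)
  comm m := LinearMap.ext fun x => Prod.ext (map_zero (A.φ m)).symm <|
    show B.φ m x = B.φ m x + δ m 0 by rw [map_zero, add_zero]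

/-- The projection onto `A` of the extension of `A` by `B` with cocycle `δ`. -/
def fst : RepHom (twistedSum A B δ) A where
  app m := LinearMap.fst K (A.V m) (B.V m)
  comm _ := rfl

theorem isSES : IsSES (inr δ) (fst δ) :=
  ⟨fun _ => LinearMap.inr_injective, fun _ => LinearMap.fst_surjective,
    fun _ => LinearMap.range_inr K _ _⟩

theorem exists_eq_coboundary_of_splits (h : Splits (fst δ)) :
    ∃ t : ∀ m, A.V m →ₗ[K] B.V m,
      ∀ m, δ m = t (atgt ε m) ∘ₗ A.φ m - B.φ m ∘ₗ t (asrc ε m) := by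
  obtain ⟨s, hs⟩ := h
  refine ⟨fun m => LinearMap.snd K (A.V m) (B.V m) ∘ₗ s.app m, fun m => LinearMap.ext fun x => ?_⟩
  have fst_section : (s.app (asrc ε m) x).1 = x := LinearMap.congr_fun (hs _) x
  have snd_comm : (s.app (atgt ε m) (A.φ m x)).2 =
      B.φ m (s.app (asrc ε m) x).2 + δ m (s.app (asrc ε m) x).1 :=
    congrArg Prod.snd (LinearMap.congr_fun (s.comm m) x)
  rw [fst_section] at snd_comm
  exact eq_sub_of_add_eq' snd_comm.symm

end twistedSum

theorem extNonzero_of_arrow (h : Disjoint A.support B.support) {m : ℕ}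
    (hsrc : asrc ε m ∈ A.support) (htgt : atgt ε m ∈ B.support) : extNonzero A B := by
  have : Nontrivial (A.V (asrc ε m)) := hsrc
  have : Nontrivial (B.V (atgt ε m)) := htgt
  have : Nontrivial (∀ m, A.V (asrc ε m) →ₗ[K] B.V (atgt ε m)) := Pi.nontrivial_at m
  obtain ⟨δ, hδ⟩ := exists_ne (0 : ∀ m, A.V (asrc ε m) →ₗ[K] B.V (atgt ε m))
  refine ⟨twistedSum A B δ, twistedSum.inr δ, twistedSum.fst δ, twistedSum.isSES δ,
    fun hsplit => hδ ?_⟩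
  obtain ⟨t, ht⟩ := twistedSum.exists_eq_coboundary_of_splits δ hsplit
  have t_eq_zero (m : ℕ) : t m = 0 := linearMap_eq_zero_of_disjoint_support h (t m)
  funext m
  rw [ht, t_eq_zero, t_eq_zero, LinearMap.zero_comp, LinearMap.comp_zero, sub_zero, Pi.zero_apply]

theorem extNonzero_iff_exists_arrow (h : Disjoint A.support B.support) :
    extNonzero A B ↔ ∃ m, asrc ε m ∈ A.support ∧ atgt ε m ∈ B.support :=
  ⟨exists_arrow_of_extNonzero, fun ⟨_, hsrc, htgt⟩ => extNonzero_of_arrow h hsrc htgt⟩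

end DisjointSupport

section Interval

variable {n : ℕ} {ε : ℕ → Bool} {i k j : ℕ}

theorem support_Xrep : (Xrep K n ε i j).support = Set.Ioc i (min j n) := by
  ext m
  change Nontrivial (XV K n i j m) ↔ _
  rw [Submodule.nontrivial_iff_ne_bot, XV, Set.mem_Ioc, le_min_iff, ← Nat.succ_le_iff]
  split_ifs with hm
  · exact iff_of_true top_ne_bot hm
  · exact iff_of_false (not_not_intro rfl) hm

theorem asrc_mem_left_and_atgt_mem_right_iff (hik : i < k) (hkj : k < j) {m : ℕ} :
    asrc ε m ∈ Set.Ioc i k ∧ atgt ε m ∈ Set.Ioc k j ↔ m = k ∧ ε k = true := by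
  simp only [Set.mem_Ioc, asrc, atgt]
  grind

theorem asrc_mem_right_and_atgt_mem_left_iff (hik : i < k) (hkj : k < j) {m : ℕ} :
    asrc ε m ∈ Set.Ioc k j ∧ atgt ε m ∈ Set.Ioc i k ↔ m = k ∧ ε k = false := by
  simp only [Set.mem_Ioc, asrc, atgt]
  grind

end Interval

/-- Lemma 3.11 i)–iii): representations sharing the middle endpoint `k`. -/
theorem shared_middle_endpoint (K : Type) [Field K] (n : ℕ) (ε : ℕ → Bool) (i k j : ℕ)
    (h1 : i < k) (h2 : k < j) (h3 : j ≤ n) :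
    homZero (Xrep K n ε i k) (Xrep K n ε k j) ∧
    homZero (Xrep K n ε k j) (Xrep K n ε i k) ∧
    (extNonzero (Xrep K n ε i k) (Xrep K n ε k j) ↔ ε k = true) ∧
    (extNonzero (Xrep K n ε k j) (Xrep K n ε i k) ↔ ε k = false) := by
  have support_left : (Xrep K n ε i k).support = Set.Ioc i k := by
    rw [support_Xrep, min_eq_left (h2.le.trans h3)]
  have support_right : (Xrep K n ε k j).support = Set.Ioc k j := by
    rw [support_Xrep, min_eq_left h3]
  have hdisj : Disjoint (Xrep K n ε i k).support (Xrep K n ε k j).support := by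
    rw [support_left, support_right]
    exact Set.Ioc_disjoint_Ioc_of_le le_rfl
  refine ⟨homZero_of_disjoint_support hdisj, homZero_of_disjoint_support hdisj.symm, ?_, ?_⟩
  · rw [extNonzero_iff_exists_arrow hdisj, support_left, support_right]
    simp only [asrc_mem_left_and_atgt_mem_right_iff h1 h2, exists_eq_left]
  · rw [extNonzero_iff_exists_arrow hdisj.symm, support_left, support_right]
    simp only [asrc_mem_right_and_atgt_mem_left_iff h1 h2, exists_eq_left]

end ESPaper
end

section
/- Assume 0 ≤ i < k < j ≤ n. Then Hom(X_{k,j}, X_{i,j}) ≠ 0 if and only if ε_k = +; Hom(X_{i,j}, X_{k,j}) ≠ 0 if and only if ε_k = −; and Ext^1(X_{k,j}, X_{i,j}) = 0 and Ext^1(X_{i,j}, X_{k,j}) = 0. -/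
namespace ESPaper

variable {K : Type} [Field K]

/-!
`Hom(A, B)` and `Ext¹(A, B)` are the kernel and the cokernel of Ringel's map
`⨁_v Hom(A_v, B_v) → ⨁_a Hom(A_{s(a)}, B_{t(a)})`, `τ ↦ (B_a τ_{s(a)} - τ_{t(a)} A_a)_a`.
For `A = X_{i,j}` and `B = X_{i',j}` it sends a family of scalars `c` supported on the common
interval `(max i i', j]` to the differences `c (s a) - c (t a)` over the arrows `a` with
`s a ∈ (i, j]` and `t a ∈ (i', j]`. These are the arrows inside the common interval and possibly
the arrow at its left end `max i i'`. Summing from the left end shows that the map is onto. A family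
in its kernel is constant on the common interval, and the arrow at the left end, when it is among
those considered, forces that constant to be `0`; its sign decides which case occurs.
-/

section RingelCriterion

variable {n : ℕ} {ε : ℕ → Bool} {A B : Rep K n ε}

theorem IsSES.exists_comp_eq {E : Rep K n ε} {f : RepHom B E} {g : RepHom E A} (hfg : IsSES f g)
    {M : Type*} [AddCommGroup M] [Module K M] {m : ℕ} {d : M →ₗ[K] E.V m}
    (hd : g.app m ∘ₗ d = 0) : ∃ η : M →ₗ[K] B.V m, f.app m ∘ₗ η = d := by
  obtain ⟨r, hr⟩ := (f.app m).exists_leftInverse_of_injective (LinearMap.ker_eq_bot.2 (hfg.1 m))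
  refine ⟨r ∘ₗ d, LinearMap.ext fun x => ?_⟩
  obtain ⟨y, hy⟩ : d x ∈ LinearMap.range (f.app m) := hfg.2.2 m ▸ LinearMap.congr_fun hd x
  have hry : r (f.app m y) = y := LinearMap.congr_fun hr y
  simp only [LinearMap.comp_apply, ← hy, hry]

theorem IsSES.comp_eq_zero {E : Rep K n ε} {f : RepHom B E} {g : RepHom E A} (hfg : IsSES f g)
    (m : ℕ) : g.app m ∘ₗ f.app m = 0 :=
  LinearMap.range_le_ker_iff.1 (hfg.2.2 m).le

/-- Vertexwise sections of `E → A` differ from a morphism by a cocycle `η`; correcting them by a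
primitive `τ` of `η` splits the extension. -/
theorem extZero_of_forall_exists_primitive
    (h : ∀ η : ∀ m, A.V (asrc ε m) →ₗ[K] B.V (atgt ε m), ∃ τ : ∀ m, A.V m →ₗ[K] B.V m,
      ∀ m, B.φ m ∘ₗ τ (asrc ε m) - τ (atgt ε m) ∘ₗ A.φ m = η m) :
    extZero A B := by
  rintro ⟨E, f, g, hfg, hsplit⟩
  choose s hs using fun m => (g.app m).exists_rightInverse_of_surjective
    (LinearMap.range_eq_top.2 (hfg.2.1 m))
  have hdefect (m : ℕ) :
      g.app (atgt ε m) ∘ₗ (E.φ m ∘ₗ s (asrc ε m) - s (atgt ε m) ∘ₗ A.φ m) = 0 := by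
    rw [LinearMap.comp_sub, ← LinearMap.comp_assoc, g.comm, LinearMap.comp_assoc, hs,
      ← LinearMap.comp_assoc, hs, LinearMap.comp_id, LinearMap.id_comp, sub_self]
  choose η hη using fun m => hfg.exists_comp_eq (hdefect m)
  obtain ⟨τ, hτ⟩ := h η
  refine hsplit ⟨⟨fun m => s m - f.app m ∘ₗ τ m, fun m => ?_⟩, fun m => ?_⟩
  · have hcorrection : E.φ m ∘ₗ s (asrc ε m) - s (atgt ε m) ∘ₗ A.φ m =
        E.φ m ∘ₗ f.app (asrc ε m) ∘ₗ τ (asrc ε m) -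
          f.app (atgt ε m) ∘ₗ τ (atgt ε m) ∘ₗ A.φ m := by
      rw [← hη, ← hτ, LinearMap.comp_sub, ← LinearMap.comp_assoc, f.comm, LinearMap.comp_assoc]
    rw [LinearMap.sub_comp, LinearMap.comp_sub, LinearMap.comp_assoc, sub_eq_sub_iff_sub_eq_sub,
      ← neg_inj, neg_sub, neg_sub]
    exact hcorrection
  · rw [LinearMap.comp_sub, hs, ← LinearMap.comp_assoc, hfg.comp_eq_zero, LinearMap.zero_comp,
      sub_zero]

end RingelCriterion

/-- The set of vertices at which `X_{i,j}` is nonzero; like `XV`, it is cut off at `n`. -/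
abbrev Xsupp (n i j : ℕ) : Set ℕ := Set.Ioc i (min j n)

section Entry

variable {n : ℕ} {ε : ℕ → Bool} {i j i' j' i'' j'' m r s t : ℕ}

theorem XV_of_mem (hm : m ∈ Xsupp n i j) : XV K n i j m = ⊤ :=
  if_pos ⟨hm.1, le_min_iff.1 hm.2⟩

theorem XV_of_notMem (hm : m ∉ Xsupp n i j) : XV K n i j m = ⊥ :=
  if_neg fun h => hm ⟨h.1, le_min h.2.1 h.2.2⟩

/-- The coordinate identifying `(X_{i,j})_m` with a subspace of `K`. -/
def Xcoord (m : ℕ) : (Xrep K n ε i j).V m →ₗ[K] K := (XV K n i j m).subtype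

theorem Xcoord_injective : Function.Injective (Xcoord m : (Xrep K n ε i j).V m →ₗ[K] K) :=
  Subtype.val_injective

theorem Xcoord_of_notMem (hm : m ∉ Xsupp n i j) (x : (Xrep K n ε i j).V m) : Xcoord m x = 0 :=
  (Submodule.mem_bot K).1 (XV_of_notMem (K := K) hm ▸ Subtype.property (p := (· ∈ XV K n i j m)) x)

theorem Xcoord_φ (x : (Xrep K n ε i j).V (asrc ε m)) :
    Xcoord (atgt ε m) ((Xrep K n ε i j).φ m x) =
      if atgt ε m ∈ Xsupp n i j then Xcoord (asrc ε m) x else 0 := by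
  split_ifs with ht
  · exact congrArg Subtype.val
      (LinearMap.congr_fun (dif_pos ⟨ht.1, le_min_iff.1 ht.2⟩ : Xφ K n ε i j m = _) x)
  · exact Xcoord_of_notMem ht _

/-- The generator of `(X_{i,j})_m`: the vector with coordinate `1` at a vertex of the support, and
`0` at all other vertices. -/
def Xgen (m : ℕ) : (Xrep K n ε i j).V m :=
  (⟨if m ∈ Xsupp n i j then 1 else 0, by
    split_ifs with hm
    · exact XV_of_mem (K := K) hm ▸ Submodule.mem_top
    · exact zero_mem _⟩ : XV K n i j m)

theorem Xcoord_Xgen : Xcoord m (Xgen m : (Xrep K n ε i j).V m) =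
    if m ∈ Xsupp n i j then 1 else 0 :=
  rfl

theorem Xcoord_smul_Xgen (x : (Xrep K n ε i j).V m) : Xcoord m x • Xgen m = x := by
  apply Xcoord_injective
  rw [map_smul, Xcoord_Xgen, smul_eq_mul]
  split_ifs with hm
  · exact mul_one _
  · rw [mul_zero, Xcoord_of_notMem hm]

/-- The matrix entry of a linear map between vertex spaces of two interval representations, with
respect to their generators. -/
def entry (L : (Xrep K n ε i j).V s →ₗ[K] (Xrep K n ε i' j').V t) : K := Xcoord t (L (Xgen s))

theorem Xcoord_apply (L : (Xrep K n ε i j).V s →ₗ[K] (Xrep K n ε i' j').V t)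
    (x : (Xrep K n ε i j).V s) : Xcoord t (L x) = entry L * Xcoord s x := by
  conv_lhs => rw [← Xcoord_smul_Xgen x, map_smul, map_smul, smul_eq_mul, mul_comm]
  rfl

theorem entry_injective : Function.Injective
    (entry : ((Xrep K n ε i j).V s →ₗ[K] (Xrep K n ε i' j').V t) → K) := fun L L' h =>
  LinearMap.ext fun x => Xcoord_injective (by rw [Xcoord_apply, Xcoord_apply, h])

theorem mem_Xsupp_of_entry_ne_zero {L : (Xrep K n ε i j).V s →ₗ[K] (Xrep K n ε i' j').V t}
    (hL : entry L ≠ 0) : s ∈ Xsupp n i j ∧ t ∈ Xsupp n i' j' := by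
  refine ⟨not_not.1 fun hs => hL ?_, not_not.1 fun ht => hL (Xcoord_of_notMem ht _)⟩
  have hgen : (Xgen s : (Xrep K n ε i j).V s) = 0 :=
    Xcoord_injective (by rw [Xcoord_of_notMem hs, map_zero])
  rw [entry, hgen, map_zero, map_zero]

theorem entry_zero : entry (0 : (Xrep K n ε i j).V s →ₗ[K] (Xrep K n ε i' j').V t) = 0 :=
  map_zero _

theorem entry_sub (L L' : (Xrep K n ε i j).V s →ₗ[K] (Xrep K n ε i' j').V t) :
    entry (L - L') = entry L - entry L' :=
  map_sub _ _ _

theorem entry_comp (M : (Xrep K n ε i' j').V t →ₗ[K] (Xrep K n ε i'' j'').V r)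
    (L : (Xrep K n ε i j).V s →ₗ[K] (Xrep K n ε i' j').V t) :
    entry (M ∘ₗ L) = entry M * entry L :=
  Xcoord_apply M _

theorem entry_φ : entry ((Xrep K n ε i j).φ m) =
    if asrc ε m ∈ Xsupp n i j ∧ atgt ε m ∈ Xsupp n i j then 1 else 0 := by
  rw [entry, Xcoord_φ, Xcoord_Xgen, ← ite_and]
  simp only [and_comm]

/-- The linear map between vertex spaces with prescribed matrix entry `c`; it is zero when one of
the two spaces is. -/
def ofEntry (c : K) : (Xrep K n ε i j).V s →ₗ[K] (Xrep K n ε i' j').V t :=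
  (Xcoord s).smulRight (c • Xgen t)

theorem entry_ofEntry {c : K} (hc : c ≠ 0 → s ∈ Xsupp n i j ∧ t ∈ Xsupp n i' j') :
    entry (ofEntry c : (Xrep K n ε i j).V s →ₗ[K] (Xrep K n ε i' j').V t) = c := by
  rw [entry, ofEntry, LinearMap.smulRight_apply, map_smul, map_smul, Xcoord_Xgen, Xcoord_Xgen]
  by_cases h : c = 0
  · simp [h]
  · simp [hc h]

end Entry

section ScalarCriteria

variable {n : ℕ} {ε : ℕ → Bool} {i j i' j' m : ℕ}

theorem entry_φ_comp (ht : atgt ε m ∈ Xsupp n i' j')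
    (L : (Xrep K n ε i j).V (asrc ε m) →ₗ[K] (Xrep K n ε i' j').V (asrc ε m)) :
    entry ((Xrep K n ε i' j').φ m ∘ₗ L) = entry L := by
  rw [entry_comp, entry_φ]
  by_cases hL : entry L = 0
  · rw [hL, mul_zero]
  · rw [if_pos ⟨(mem_Xsupp_of_entry_ne_zero hL).2, ht⟩, one_mul]

theorem entry_comp_φ (hs : asrc ε m ∈ Xsupp n i j)
    (L : (Xrep K n ε i j).V (atgt ε m) →ₗ[K] (Xrep K n ε i' j').V (atgt ε m)) :
    entry (L ∘ₗ (Xrep K n ε i j).φ m) = entry L := by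
  rw [entry_comp, entry_φ]
  by_cases hL : entry L = 0
  · rw [hL, zero_mul]
  · rw [if_pos ⟨hs, (mem_Xsupp_of_entry_ne_zero hL).1⟩, mul_one]

theorem eq_of_entry_eq_of_mem {s t : ℕ}
    {L L' : (Xrep K n ε i j).V s →ₗ[K] (Xrep K n ε i' j').V t}
    (h : s ∈ Xsupp n i j → t ∈ Xsupp n i' j' → entry L = entry L') : L = L' := by
  refine entry_injective (not_not.1 fun hne => ?_)
  have hsub : entry (L - L') ≠ 0 := entry_sub L L' ▸ sub_ne_zero.2 hne
  exact hne (h (mem_Xsupp_of_entry_ne_zero hsub).1 (mem_Xsupp_of_entry_ne_zero hsub).2)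

theorem homNonzero_Xrep_iff_s7 : homNonzero (Xrep K n ε i j) (Xrep K n ε i' j') ↔
    ∃ c : ℕ → K, c ≠ 0 ∧ Function.support c ⊆ Xsupp n i j ∩ Xsupp n i' j' ∧
      ∀ m, asrc ε m ∈ Xsupp n i j → atgt ε m ∈ Xsupp n i' j' → c (atgt ε m) = c (asrc ε m) := by
  constructor
  · rintro ⟨θ, m, hm⟩
    refine ⟨fun m => entry (θ.app m), fun h => hm ?_, fun _ => mem_Xsupp_of_entry_ne_zero,
      fun m hs ht => ?_⟩
    · exact entry_injective ((congrFun h m).trans entry_zero.symm)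
    · calc entry (θ.app (atgt ε m))
          _ = entry (θ.app (atgt ε m) ∘ₗ (Xrep K n ε i j).φ m) := (entry_comp_φ hs _).symm
          _ = entry ((Xrep K n ε i' j').φ m ∘ₗ θ.app (asrc ε m)) := by rw [θ.comm]
          _ = entry (θ.app (asrc ε m)) := entry_φ_comp ht _
  · rintro ⟨c, hc, hsupp, hconst⟩
    obtain ⟨m, hm⟩ := Function.ne_iff.1 hc
    refine ⟨⟨fun m => ofEntry (c m), fun m => eq_of_entry_eq_of_mem fun hs ht => ?_⟩, m,
      fun h => hm ?_⟩
    · rw [entry_comp_φ hs, entry_φ_comp ht, entry_ofEntry (@hsupp _), entry_ofEntry (@hsupp _),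
        hconst m hs ht]
    · exact (entry_ofEntry (@hsupp m)).symm.trans ((congrArg entry h).trans entry_zero)

theorem extZero_Xrep_of_forall_exists_primitive
    (h : ∀ d : ℕ → K, ∃ c : ℕ → K, Function.support c ⊆ Xsupp n i j ∩ Xsupp n i' j' ∧
      ∀ m, asrc ε m ∈ Xsupp n i j → atgt ε m ∈ Xsupp n i' j' →
        c (asrc ε m) - c (atgt ε m) = d m) :
    extZero (Xrep K n ε i j) (Xrep K n ε i' j') := by
  refine extZero_of_forall_exists_primitive fun η => ?_
  obtain ⟨c, hsupp, hc⟩ := h fun m => entry (η m)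
  refine ⟨fun m => ofEntry (c m), fun m => eq_of_entry_eq_of_mem fun hs ht => ?_⟩
  rw [entry_sub, entry_φ_comp ht, entry_comp_φ hs, entry_ofEntry (@hsupp _),
    entry_ofEntry (@hsupp _), hc m hs ht]

end ScalarCriteria

section SharedRightEndpoint

variable {n : ℕ} {ε : ℕ → Bool} {i i' j m : ℕ}

theorem mem_Ico_of_asrc_mem_of_atgt_mem (hs : asrc ε m ∈ Xsupp n i j)
    (ht : atgt ε m ∈ Xsupp n i' j) : m ∈ Set.Ico (max i i') (min j n) := by
  simp only [asrc, atgt, Set.mem_Ioc, Set.mem_Ico] at *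
  split_ifs at * <;> omega

theorem asrc_mem_Xsupp (hi : i < m) (hm : m < min j n) : asrc ε m ∈ Xsupp n i j := by
  simp only [asrc, Set.mem_Ioc]
  split_ifs <;> omega

theorem atgt_mem_Xsupp (hi : i < m) (hm : m < min j n) : atgt ε m ∈ Xsupp n i j := by
  simp only [atgt, Set.mem_Ioc]
  split_ifs <;> omega

theorem asrc_mem_Xsupp_self_iff (hi : i < min j n) : asrc ε i ∈ Xsupp n i j ↔ ε i = false := by
  cases hε : ε i
  · simpa [asrc, hε, Nat.succ_le_iff] using hi
  · simp [asrc, hε]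

theorem atgt_mem_Xsupp_self_iff (hi : i < min j n) : atgt ε i ∈ Xsupp n i j ↔ ε i = true := by
  cases hε : ε i
  · simp [atgt, hε]
  · simpa [atgt, hε, Nat.succ_le_iff] using hi

theorem Xsupp_inter_Xsupp : Xsupp n i j ∩ Xsupp n i' j = Xsupp n (max i i') j := by
  rw [Set.Ioc_inter_Ioc, inf_idem]

theorem apply_atgt_eq_apply_asrc_iff {α : Type*} (c : ℕ → α) :
    c (atgt ε m) = c (asrc ε m) ↔ c (m + 1) = c m := by
  cases hε : ε m <;> simp [asrc, atgt, hε, eq_comm]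

theorem eq_zero_of_support_subset_Ioc {α : Type*} [Zero α] {a b : ℕ} {c : ℕ → α}
    (hsupp : Function.support c ⊆ Set.Ioc a b) (hconst : ∀ m ∈ Set.Ico a b, c (m + 1) = c m) :
    c = 0 := by
  have hzero (m : ℕ) (hm : m ∉ Set.Ioc a b) : c m = 0 :=
    Function.notMem_support.1 fun h => hm (hsupp h)
  funext m
  induction m with
  | zero => exact hzero 0 (by simp)
  | succ m ih =>
    by_cases hm : m ∈ Set.Ico a b
    · exact (hconst m hm).trans ih
    · exact hzero (m + 1) fun h => hm ⟨Nat.le_of_lt_succ h.1, h.2⟩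

theorem homNonzero_Xrep_shared_right_iff (hlt : max i i' < min j n) :
    homNonzero (Xrep K n ε i j) (Xrep K n ε i' j) ↔
      ¬(asrc ε (max i i') ∈ Xsupp n i j ∧ atgt ε (max i i') ∈ Xsupp n i' j) := by
  rw [homNonzero_Xrep_iff_s7, Xsupp_inter_Xsupp]
  simp only [apply_atgt_eq_apply_asrc_iff]
  constructor
  · rintro ⟨c, hc, hsupp, hconst⟩ ⟨hs, ht⟩
    refine hc (eq_zero_of_support_subset_Ioc hsupp fun m hm => ?_)
    obtain rfl | hlt := hm.1.eq_or_lt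
    · exact hconst _ hs ht
    · have ⟨hi, hi'⟩ := max_lt_iff.1 hlt
      exact hconst m (asrc_mem_Xsupp hi hm.2) (atgt_mem_Xsupp hi' hm.2)
  · intro hfree
    refine ⟨(Xsupp n (max i i') j).indicator 1, fun h => ?_, Set.support_indicator_subset,
      fun m hs ht => ?_⟩
    · have hmem : max i i' + 1 ∈ Xsupp n (max i i') j := ⟨Nat.lt_succ_self _, hlt⟩
      exact one_ne_zero ((Set.indicator_of_mem hmem _).symm.trans (congrFun h _))
    · obtain ⟨hle, hm⟩ := mem_Ico_of_asrc_mem_of_atgt_mem hs ht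
      have hne : max i i' ≠ m := by
        rintro rfl
        exact hfree ⟨hs, ht⟩
      have hmem : m ∈ Xsupp n (max i i') j := ⟨hle.lt_of_ne hne, hm.le⟩
      have hmem' : m + 1 ∈ Xsupp n (max i i') j := ⟨Nat.lt_succ_of_le hle, hm⟩
      rw [Set.indicator_of_mem hmem, Set.indicator_of_mem hmem', Pi.one_apply, Pi.one_apply]

theorem extZero_Xrep_shared_right :
    extZero (Xrep K n ε i j) (Xrep K n ε i' j) := by
  refine extZero_Xrep_of_forall_exists_primitive fun d => ?_
  let δ (l : ℕ) : K := if ε l then -d l else d l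
  let c (m : ℕ) : K := ∑ l ∈ Finset.Ico (max i i') m, δ l
  refine ⟨(Xsupp n (max i i') j).indicator c,
    Xsupp_inter_Xsupp ▸ Set.support_indicator_subset, fun m hs ht => ?_⟩
  obtain ⟨hle, hm⟩ := mem_Ico_of_asrc_mem_of_atgt_mem hs ht
  have hc (l : ℕ) (hl : l ≤ min j n) : (Xsupp n (max i i') j).indicator c l = c l := by
    refine Set.indicator_apply_eq_self.2 fun hnot => ?_
    simp only [c, Finset.Ico_eq_empty fun h => hnot ⟨h, hl⟩, Finset.sum_empty]
  have hstep : c (m + 1) = c m + δ m := Finset.sum_Ico_succ_top hle δ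
  cases hε : ε m <;> simp [asrc, atgt, hε, hc m hm.le, hc (m + 1) hm, hstep, δ]

end SharedRightEndpoint

/-- Lemma 3.11 vii)–ix): representations sharing the right endpoint `j`. -/
theorem shared_right_endpoint (K : Type) [Field K] (n : ℕ) (ε : ℕ → Bool) (i k j : ℕ)
    (h1 : i < k) (h2 : k < j) (h3 : j ≤ n) :
    (homNonzero (Xrep K n ε k j) (Xrep K n ε i j) ↔ ε k = true) ∧
    (homNonzero (Xrep K n ε i j) (Xrep K n ε k j) ↔ ε k = false) ∧
    extZero (Xrep K n ε k j) (Xrep K n ε i j) ∧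
    extZero (Xrep K n ε i j) (Xrep K n ε k j) := by
  have hk : k < min j n := lt_min h2 (h2.trans_le h3)
  have hki : max k i = k := max_eq_left h1.le
  have hik : max i k = k := max_eq_right h1.le
  refine ⟨?_, ?_, extZero_Xrep_shared_right, extZero_Xrep_shared_right⟩
  · rw [homNonzero_Xrep_shared_right_iff (hki.symm ▸ hk), hki,
      and_iff_left (atgt_mem_Xsupp h1 hk), asrc_mem_Xsupp_self_iff hk, Bool.not_eq_false]
  · rw [homNonzero_Xrep_shared_right_iff (hik.symm ▸ hk), hik,
      and_iff_right (asrc_mem_Xsupp h1 hk), atgt_mem_Xsupp_self_iff hk, Bool.not_eq_true]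

end ESPaper
end
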